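/- arXiv:1801.02979 — 2 statements merged into one kernel-verified Lean document; each statement's English description precedes it below -/
import Mathlib

section
/- Let 1 ≤ k ≤ L be integers, 0 < λ < 1, and let u be a solution of the mean-field ODE system taking values in Ū with initial condition g ∈ U. Then for each j ≥ 0, lim_{t→∞} (u_j(t) − ū_j) = 0. In particular, ū is the unique element w of U satisfying λ[f(w_{j−1}) − f(w_j)] = k[w_j − w_{j+1}] for all j ≥ 1 with w_0 = 1. -/
open Finset Set Filter

/-- The polynomial `f ≡ f^{(L,k)}` from the paper. -/
noncomputable def fLk (L k : ℕ) (x : ℝ) : ℝ :=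
  ∑ i ∈ Finset.Icc 1 k,
    (L.choose (L - k + i) : ℝ) * ((L - k + i - 2).choose (i - 1) : ℝ) *
      (-1 : ℝ) ^ (i - 1) * x ^ (L - k + i)

/-- Membership in `Ū`: real sequences with `1 = u_0 ≥ u_1 ≥ … ≥ 0`. -/
def InUbar (u : ℕ → ℝ) : Prop :=
  u 0 = 1 ∧ (∀ j, u (j + 1) ≤ u j) ∧ (∀ j, 0 ≤ u j)

/-- A `Ū`-valued solution of the mean-field ODE system with initial condition `g`. -/
def IsMFSol (L k : ℕ) (lam : ℝ) (g : ℕ → ℝ) (u : ℝ → ℕ → ℝ) : Prop :=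
  (∀ j, u 0 j = g j) ∧
  (∀ t ∈ Set.Ici (0 : ℝ), InUbar (u t)) ∧
  (∀ j, 1 ≤ j → ∀ t ∈ Set.Ici (0 : ℝ),
    HasDerivWithinAt (fun τ => u τ j)
      (lam * (fLk L k (u t (j - 1)) - fLk L k (u t j)) - k * (u t j - u t (j + 1)))
      (Set.Ici (0 : ℝ)) t)


/-- Coefficients of `f`, for `L = p + q + 2`, `k = q + 1`. -/
noncomputable def cPQ (p q j : ℕ) : ℝ :=
  ((p + q + 2).choose (p + 2 + j) : ℝ) * ((p + j).choose j : ℝ) * (-1 : ℝ) ^ j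

theorem fLk_expand (p q : ℕ) (x : ℝ) :
    fLk (p + q + 2) (q + 1) x = ∑ j ∈ Finset.range (q + 1), cPQ p q j * x ^ (p + 2 + j) := by
  unfold fLk cPQ
  have : Finset.Icc 1 (q + 1) = (Finset.range (q + 1)).image (· + 1) := by
    ext a
    simp only [Finset.mem_Icc, Finset.mem_image, Finset.mem_range]
    constructor
    · rintro ⟨h1, h2⟩
      exact ⟨a - 1, by omega, by omega⟩
    · rintro ⟨b, hb, rfl⟩
      omega
  rw [this, Finset.sum_image (by intro a _ b _ h; simpa using h)]
  refine Finset.sum_congr rfl fun j _ => ?_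
  have e1 : p + q + 2 - (q + 1) + (j + 1) = p + 2 + j := by omega
  have e2 : p + 2 + j - 2 = p + j := by omega
  rw [e1, e2, Nat.add_sub_cancel]

theorem cPQ_sum (p q : ℕ) : ∑ j ∈ Finset.range (q + 1), cPQ p q j = q + 1 := by
  have h := Ring.add_choose_eq (R := ℤ) (r := -((p + 1 : ℕ) : ℤ)) (s := ((p + q + 2 : ℕ) : ℤ)) q
    (Commute.all _ _)
  have e : -((p + 1 : ℕ) : ℤ) + ((p + q + 2 : ℕ) : ℤ) = ((q + 1 : ℕ) : ℤ) := by
    push_cast; ring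
  rw [e, Ring.choose_natCast, Finset.Nat.sum_antidiagonal_eq_sum_range_succ_mk] at h
  have h2 : ∀ j ∈ Finset.range (q + 1), cPQ p q j =
      ((Ring.choose (-((p + 1 : ℕ) : ℤ)) j * Ring.choose ((p + q + 2 : ℕ) : ℤ) (q - j) : ℤ) : ℝ) := by
    intro j hj
    have hj' : j ≤ q := by simpa [Nat.lt_succ_iff] using hj
    rw [Ring.choose_natCast, Ring.choose_neg]
    have e3 : ((p + 1 : ℕ) : ℤ) + (j : ℤ) - 1 = ((p + j : ℕ) : ℤ) := by push_cast; ring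
    rw [e3, Ring.choose_natCast]
    have e4 : (p + q + 2).choose (p + 2 + j) = (p + q + 2).choose (q - j) := by
      apply Nat.choose_symm_of_eq_add; omega
    unfold cPQ
    rw [e4]
    simp only [Units.smul_def, Int.negOnePow_def]
    push_cast
    simp
    ring
  rw [Finset.sum_congr rfl h2, ← Int.cast_sum]
  simp only [] at h
  rw [← h]
  simp

theorem cPQ_id (p q j : ℕ) :
    cPQ p q j * ((p + 2 + j : ℕ) : ℝ) * ((p + 1 + j : ℕ) : ℝ) =
      ((p + q + 2 : ℕ) : ℝ) * ((p + q + 1 : ℕ) : ℝ) * ((p + q).choose p : ℝ) *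
        ((q.choose j : ℝ) * (-1) ^ j) := by
  have h1 := Nat.add_one_mul_choose_eq (p + q + 1) (p + j + 1)
  have h2 := Nat.add_one_mul_choose_eq (p + q) (p + j)
  have h3 := Nat.choose_mul (n := p + q) (k := p + j) (s := p) (by omega)
  rw [Nat.choose_symm_add, Nat.add_sub_cancel_left, Nat.add_sub_cancel_left] at h3
  have e : p + 2 + j = p + j + 1 + 1 := by ring
  have e' : p + 1 + j = p + j + 1 := by ring
  unfold cPQ
  rw [e, e']
  have h1' : ((p + q + 1 + 1 : ℕ) : ℝ) * ((p + q + 1).choose (p + j + 1) : ℝ) =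
     ((p + q + 1 + 1).choose (p + j + 1 + 1) : ℝ) * ((p + j + 1 + 1 : ℕ) : ℝ) := by exact_mod_cast h1
  have h2' : ((p + q + 1 : ℕ) : ℝ) * ((p + q).choose (p + j) : ℝ) =
     ((p + q + 1).choose (p + j + 1) : ℝ) * ((p + j + 1 : ℕ) : ℝ) := by exact_mod_cast h2
  have h3' : ((p + q).choose (p + j) : ℝ) * ((p + j).choose j : ℝ) =
     ((p + q).choose p : ℝ) * (q.choose j : ℝ) := by exact_mod_cast h3
  calc _ = (((p + q + 1 + 1).choose (p + j + 1 + 1) : ℝ) * ((p + j + 1 + 1 : ℕ) : ℝ)) *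
        ((p + j + 1 : ℕ) : ℝ) * ((p + j).choose j : ℝ) * (-1) ^ j := by ring
    _ = ((p + q + 1 + 1 : ℕ) : ℝ) * (((p + q + 1).choose (p + j + 1) : ℝ) *
        ((p + j + 1 : ℕ) : ℝ)) * ((p + j).choose j : ℝ) * (-1) ^ j := by rw [← h1']; ring
    _ = ((p + q + 1 + 1 : ℕ) : ℝ) * ((p + q + 1 : ℕ) : ℝ) * (((p + q).choose (p + j) : ℝ) *
         ((p + j).choose j : ℝ)) * (-1) ^ j := by rw [← h2']; ring
    _ = _ := by rw [h3']; ring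

theorem fLk_props_lt (p q : ℕ) :
    let f := fLk (p + q + 2) (q + 1)
    ∃ K : ℝ, 0 ≤ K ∧ Continuous f ∧ f 0 = 0 ∧ MonotoneOn f (Set.Icc 0 1) ∧
      (∀ x ∈ Set.Icc (0 : ℝ) 1, f x ≤ (q + 1 : ℕ) * x) ∧
      (∀ x ∈ Set.Icc (0 : ℝ) 1, ∀ y ∈ Set.Icc (0 : ℝ) 1, |f x - f y| ≤ K * |x - y|) := by
  intro f
  have hf : f = fun x => ∑ j ∈ Finset.range (q + 1), cPQ p q j * x ^ (p + 2 + j) := by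
    funext x; exact fLk_expand p q x
  set f1 : ℝ → ℝ := fun x => ∑ j ∈ Finset.range (q + 1),
    cPQ p q j * (((p + 2 + j : ℕ) : ℝ) * x ^ (p + 1 + j)) with hf1
  set f2 : ℝ → ℝ := fun x => ∑ j ∈ Finset.range (q + 1),
    cPQ p q j * (((p + 2 + j : ℕ) : ℝ) * (((p + 1 + j : ℕ) : ℝ) * x ^ (p + j))) with hf2
  have d1 : ∀ x, HasDerivAt f (f1 x) x := by
    intro x
    rw [hf]
    refine HasDerivAt.fun_sum fun j _ => ?_
    have := hasDerivAt_pow (p + 2 + j) x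
    rw [show p + 2 + j - 1 = p + 1 + j by omega] at this
    exact this.const_mul _
  have d2 : ∀ x, HasDerivAt f1 (f2 x) x := by
    intro x
    refine HasDerivAt.fun_sum fun j _ => ?_
    have := hasDerivAt_pow (p + 1 + j) x
    rw [show p + 1 + j - 1 = p + j by omega] at this
    exact (this.const_mul _).const_mul _
  have f2nn : ∀ x ∈ Set.Icc (0 : ℝ) 1, 0 ≤ f2 x := by
    intro x hx
    have : f2 x = ((p + q + 2 : ℕ) : ℝ) * ((p + q + 1 : ℕ) : ℝ) * ((p + q).choose p : ℝ) *
        x ^ p * (1 - x) ^ q := by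
      have e : (1 - x) ^ q = ∑ j ∈ Finset.range (q + 1), (q.choose j : ℝ) * (-1) ^ j * x ^ j := by
        rw [show (1 - x) = (-x + 1) by ring, add_pow]
        refine Finset.sum_congr rfl fun j _ => ?_
        rw [neg_pow]; simp; ring
      rw [e, hf2, Finset.mul_sum]
      refine Finset.sum_congr rfl fun j _ => ?_
      have := cPQ_id p q j
      rw [pow_add]
      linear_combination (x ^ p * x ^ j) * this
    rw [this]
    have h1 : 0 ≤ 1 - x := by linarith [hx.2]
    have h0 := hx.1
    positivity
  have c1 : Continuous f1 := by
    rw [hf1]; fun_prop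
  have c0 : Continuous f := by
    rw [hf]; fun_prop
  have e1 : deriv f = f1 := funext fun x => (d1 x).deriv
  have e2 : deriv f1 = f2 := funext fun x => (d2 x).deriv
  have m1 : MonotoneOn f1 (Set.Icc 0 1) := by
    refine monotoneOn_of_deriv_nonneg (convex_Icc 0 1) c1.continuousOn
      (fun x _ => (d2 x).differentiableAt.differentiableWithinAt) fun x hx => ?_
    rw [e2]; exact f2nn x (interior_subset hx)
  have f10 : f1 0 = 0 := by
    rw [hf1]
    refine Finset.sum_eq_zero fun j _ => ?_
    rw [zero_pow (by omega)]; ring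
  have f1nn : ∀ x ∈ Set.Icc (0 : ℝ) 1, 0 ≤ f1 x := fun x hx => by
    rw [← f10]; exact m1 (by simp) hx hx.1
  have f0 : f 0 = 0 := by
    rw [hf]
    refine Finset.sum_eq_zero fun j _ => ?_
    rw [zero_pow (by omega)]; ring
  have f11 : f 1 = (q + 1 : ℕ) := by
    rw [hf]; simp [cPQ_sum]
  have m0 : MonotoneOn f (Set.Icc 0 1) := by
    refine monotoneOn_of_deriv_nonneg (convex_Icc 0 1) c0.continuousOn
      (fun x _ => (d1 x).differentiableAt.differentiableWithinAt) fun x hx => ?_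
    rw [e1]; exact f1nn x (interior_subset hx)
  have cv : ConvexOn ℝ (Set.Icc 0 1) f := by
    refine convexOn_of_deriv2_nonneg' (convex_Icc 0 1)
      (fun x _ => (d1 x).differentiableAt.differentiableWithinAt) ?_ ?_
    · rw [e1]; exact fun x _ => (d2 x).differentiableAt.differentiableWithinAt
    · intro x hx
      simp only [Function.iterate_succ, Function.iterate_zero, Function.comp, id]
      rw [e1, e2]; exact f2nn x hx
  refine ⟨f1 1, f1nn 1 (by simp), c0, f0, m0, ?_, ?_⟩
  · intro x hx
    have := cv.2 (show (0 : ℝ) ∈ Set.Icc (0 : ℝ) 1 by simp) (show (1 : ℝ) ∈ Set.Icc (0 : ℝ) 1 by simp)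
      (show 0 ≤ 1 - x by linarith [hx.2]) hx.1 (by ring)
    simp only [smul_eq_mul, mul_zero, zero_add, mul_one, f0, f11] at this
    linarith
  · intro x hx y hy
    have := (convex_Icc (0 : ℝ) 1).norm_image_sub_le_of_norm_hasDerivWithin_le (f := f) (f' := f1)
      (C := f1 1) (x := y) (y := x) (fun z _ => (d1 z).hasDerivWithinAt)
      (fun z hz => by
        rw [Real.norm_eq_abs, abs_of_nonneg (f1nn z hz)]
        exact m1 hz (by simp) hz.2) hy hx
    simpa [Real.norm_eq_abs] using this

theorem fLk_props (L k : ℕ) (hk : 1 ≤ k) (hkL : k ≤ L) :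
    ∃ K : ℝ, 0 ≤ K ∧ Continuous (fLk L k) ∧ fLk L k 0 = 0 ∧ MonotoneOn (fLk L k) (Set.Icc 0 1) ∧
      (∀ x ∈ Set.Icc (0 : ℝ) 1, fLk L k x ≤ k * x) ∧
      (∀ x ∈ Set.Icc (0 : ℝ) 1, ∀ y ∈ Set.Icc (0 : ℝ) 1,
        |fLk L k x - fLk L k y| ≤ K * |x - y|) := by
  rcases hkL.eq_or_lt with rfl | hlt
  · have h : fLk k k = fun x => (k : ℝ) * x := by
      funext x
      unfold fLk
      rw [Finset.sum_eq_single 1]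
      · simp
      · intro b hb hb1
        have hb' := Finset.mem_Icc.1 hb
        rw [Nat.sub_self, zero_add, Nat.choose_eq_zero_of_lt (show b - 2 < b - 1 by omega)]
        simp
      · intro h; exact absurd (Finset.mem_Icc.2 ⟨le_refl _, hk⟩) h
    have hk0 : (0 : ℝ) ≤ k := Nat.cast_nonneg k
    refine ⟨k, hk0, ?_, ?_, ?_, ?_, ?_⟩
    · rw [h]; fun_prop
    · rw [h]; simp
    · rw [h]; intro x _ y _ hxy; exact mul_le_mul_of_nonneg_left hxy hk0
    · intro x _; rw [h]
    · intro x _ y _; rw [h]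
      simp only
      rw [← mul_sub, abs_mul, abs_of_nonneg hk0]
  · obtain ⟨q, rfl⟩ : ∃ q, k = q + 1 := ⟨k - 1, by omega⟩
    obtain ⟨p, rfl⟩ : ∃ p, L = p + q + 2 := ⟨L - q - 2, by omega⟩
    exact fLk_props_lt p q

theorem absODE (x p q : ℝ → ℝ) (hx : Continuous x) (hp : Continuous p) (hq : Continuous q)
    (M : ℝ) (hd : ∀ t, 0 < t → HasDerivAt x (p t - q t) t)
    (hxq : ∀ t, 0 ≤ x t * q t) (hqM : ∀ t, |q t| ≤ M * |x t|) (T : ℝ) (hT : 0 ≤ T) :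
    |x T| + ∫ t in (0 : ℝ)..T, |q t| ≤ |x 0| + ∫ t in (0 : ℝ)..T, |p t| := by
  have key : ∀ δ : ℝ, 0 < δ → |x T| + (∫ t in (0 : ℝ)..T, |q t|) ≤
      |x 0| + (∫ t in (0 : ℝ)..T, |p t|) + (1 + |M| * T) * δ := by
    intro δ hδ
    set φ : ℝ → ℝ := fun t => √(x t ^ 2 + δ ^ 2) with hφ
    have hpos : ∀ t, 0 < x t ^ 2 + δ ^ 2 := fun t => by positivity
    have φpos : ∀ t, 0 < φ t := fun t => Real.sqrt_pos.2 (hpos t)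
    have φsq : ∀ t, φ t ^ 2 = x t ^ 2 + δ ^ 2 := fun t => Real.sq_sqrt (hpos t).le
    have φge : ∀ t, |x t| ≤ φ t := fun t => Real.abs_le_sqrt (by nlinarith [sq_nonneg δ])
    have φle : ∀ t, φ t ≤ |x t| + δ := fun t => by
      refine Real.sqrt_le_iff.2 ⟨by positivity, ?_⟩
      have := sq_abs (x t)
      nlinarith [mul_nonneg (abs_nonneg (x t)) hδ.le]
    have cφ : Continuous φ := by rw [hφ]; fun_prop
    set D : ℝ → ℝ := fun t => x t * (p t - q t) / φ t with hD
    have cD : Continuous D := by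
      rw [hD]
      exact (hx.mul (hp.sub hq)).div cφ fun t => (φpos t).ne'
    have dφ : ∀ t, 0 < t → HasDerivAt φ (D t) t := by
      intro t ht
      have h1 := (((hd t ht).pow 2).add_const (δ ^ 2)).sqrt (hpos t).ne'
      refine h1.congr_deriv ?_
      have := (φpos t).ne'
      simp only [hD]
      change _ / (2 * φ t) = _
      field_simp
      ring
    have hDle : ∀ t, D t ≤ |p t| - |q t| + |M| * δ := by
      intro t
      simp only [hD]
      rw [div_le_iff₀ (φpos t)]
      have h1 : x t * p t ≤ |p t| * φ t := by
        calc x t * p t ≤ |x t * p t| := le_abs_self _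
          _ = |p t| * |x t| := by rw [abs_mul, mul_comm]
          _ ≤ _ := mul_le_mul_of_nonneg_left (φge t) (abs_nonneg _)
      have h2 : x t * q t = |q t| * |x t| := by
        rw [← abs_mul, mul_comm, abs_of_nonneg]; rw [mul_comm]; exact hxq t
      have h3 : |q t| * (φ t - |x t|) ≤ |M| * δ * φ t := by
        calc |q t| * (φ t - |x t|) ≤ |q t| * δ :=
              mul_le_mul_of_nonneg_left (by linarith [φle t]) (abs_nonneg _)
          _ ≤ (|M| * φ t) * δ := by
              refine mul_le_mul_of_nonneg_right ?_ hδ.le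
              calc |q t| ≤ M * |x t| := hqM t
                _ ≤ |M| * |x t| := mul_le_mul_of_nonneg_right (le_abs_self _) (abs_nonneg _)
                _ ≤ _ := mul_le_mul_of_nonneg_left (φge t) (abs_nonneg _)
          _ = _ := by ring
      nlinarith
    have ftc : ∫ t in (0 : ℝ)..T, D t = φ T - φ 0 :=
      intervalIntegral.integral_eq_sub_of_hasDerivAt_of_le hT cφ.continuousOn
        (fun t ht => dφ t ht.1) (cD.intervalIntegrable _ _)
    have hint : ∫ t in (0 : ℝ)..T, D t ≤ ∫ t in (0 : ℝ)..T, (|p t| - |q t| + |M| * δ) :=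
      intervalIntegral.integral_mono_on hT (cD.intervalIntegrable _ _)
        (Continuous.intervalIntegrable (by fun_prop) _ _) fun t _ => hDle t
    rw [intervalIntegral.integral_add (Continuous.intervalIntegrable (by fun_prop) _ _)
      (Continuous.intervalIntegrable (by fun_prop) _ _),
      intervalIntegral.integral_sub (Continuous.intervalIntegrable (by fun_prop) _ _)
      (Continuous.intervalIntegrable (by fun_prop) _ _), intervalIntegral.integral_const,
      smul_eq_mul] at hint
    have := φge T
    have := φle 0
    nlinarith
  refine le_of_forall_pos_le_add fun ε hε => ?_
  have hc : 0 < 1 + |M| * T := by positivity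
  have := key (ε / (1 + |M| * T)) (by positivity)
  rwa [mul_div_cancel₀ _ hc.ne'] at this

theorem abstract_conv (e a : ℕ → ℝ → ℝ) (ce : ∀ j, Continuous (e j)) (ca : ∀ j, Continuous (a j))
    (κ M : ℝ) (hκ : 0 < κ) (hM : 0 ≤ M)
    (hd : ∀ j t, 0 < t →
      HasDerivAt (e (j + 1)) (κ * (a j t - a (j + 1) t - e (j + 1) t + e (j + 2) t)) t)
    (e0 : ∀ t, e 0 t = 0)
    (hea : ∀ j t, 0 ≤ e j t * a j t) (haM : ∀ j t, |a j t| ≤ M * |e j t|)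
    (hs : Summable fun j => |e (j + 1) 0|)
    (hlim : ∀ T, 0 ≤ T → Tendsto (fun j => ∫ t in (0 : ℝ)..T, |e j t|) atTop (nhds 0)) (j : ℕ) :
    Tendsto (e j) atTop (nhds 0) := by
  have cabs : ∀ j, Continuous fun t => |e j t| := fun j => (ce j).abs
  have caabs : ∀ j, Continuous fun t => |a j t| := fun j => (ca j).abs
  have step : ∀ T, 0 ≤ T → ∀ j,
      κ * ((∫ t in (0 : ℝ)..T, |a (j + 1) t|) + ∫ t in (0 : ℝ)..T, |e (j + 1) t|) ≤
      |e (j + 1) 0| + κ * ((∫ t in (0 : ℝ)..T, |a j t|) + ∫ t in (0 : ℝ)..T, |e (j + 2) t|) := by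
    intro T hT j
    have h := absODE (e (j + 1)) (fun t => κ * (a j t + e (j + 2) t))
      (fun t => κ * (a (j + 1) t + e (j + 1) t)) (ce _)
      (continuous_const.mul ((ca _).add (ce _))) (continuous_const.mul ((ca _).add (ce _)))
      (κ * (M + 1)) (fun t ht => by
        convert hd j t ht using 1; ring)
      (fun t => by nlinarith [hea (j + 1) t, mul_nonneg hκ.le (hea (j + 1) t),
          mul_nonneg hκ.le (sq_nonneg (e (j + 1) t))])
      (fun t => by
        rw [abs_mul, abs_of_pos hκ, mul_assoc]
        refine mul_le_mul_of_nonneg_left ?_ hκ.le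
        have := abs_add_le (a (j + 1) t) (e (j + 1) t)
        have := haM (j + 1) t
        linarith) T hT
    have h1 : (∫ t in (0 : ℝ)..T, |κ * (a (j + 1) t + e (j + 1) t)|) =
        κ * ((∫ t in (0 : ℝ)..T, |a (j + 1) t|) + ∫ t in (0 : ℝ)..T, |e (j + 1) t|) := by
      rw [← intervalIntegral.integral_add ((caabs _).intervalIntegrable _ _)
        ((cabs _).intervalIntegrable _ _), ← intervalIntegral.integral_const_mul]
      congr 1
      funext t
      rw [abs_mul, abs_of_pos hκ]
      congr 1
      rw [abs_add_eq_add_abs_iff]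
      have := hea (j + 1) t
      rcases mul_nonneg_iff.1 this with h | h
      · exact Or.inl ⟨h.2, h.1⟩
      · exact Or.inr ⟨h.2, h.1⟩
    have h2 : (∫ t in (0 : ℝ)..T, |κ * (a j t + e (j + 2) t)|) ≤
        κ * ((∫ t in (0 : ℝ)..T, |a j t|) + ∫ t in (0 : ℝ)..T, |e (j + 2) t|) := by
      rw [← intervalIntegral.integral_add ((caabs _).intervalIntegrable _ _)
        ((cabs _).intervalIntegrable _ _), ← intervalIntegral.integral_const_mul]
      refine intervalIntegral.integral_mono_on hT
        ((continuous_const.mul ((ca _).add (ce _))).abs.intervalIntegrable _ _)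
        ((continuous_const.mul ((caabs _).add (cabs _))).intervalIntegrable _ _) fun t _ => ?_
      rw [abs_mul, abs_of_pos hκ]
      exact mul_le_mul_of_nonneg_left (abs_add_le _ _) hκ.le
    have := abs_nonneg (e (j + 1) T)
    linarith
  have tele : ∀ T, 0 ≤ T → ∀ n m,
      κ * ((∫ t in (0 : ℝ)..T, |a (n + m) t|) + ∫ t in (0 : ℝ)..T, |e (n + 1) t|) ≤
      ∑ i ∈ Finset.range m, |e (i + n + 1) 0| +
        κ * ((∫ t in (0 : ℝ)..T, |a n t|) + ∫ t in (0 : ℝ)..T, |e (n + m + 1) t|) := by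
    intro T hT n m
    induction m with
    | zero => simp
    | succ m ih =>
      rw [Finset.sum_range_succ]
      have := step T hT (n + m)
      rw [show m + n + 1 = n + m + 1 by ring]
      rw [show n + (m + 1) = n + m + 1 by ring, show n + m + 1 + 1 = n + m + 2 by ring]
      linarith
  have bnd : ∀ n T, 0 ≤ T → κ * (∫ t in (0 : ℝ)..T, |e (n + 1) t|) ≤
      ∑' i, |e (i + n + 1) 0| + κ * ∫ t in (0 : ℝ)..T, |a n t| := by
    intro n T hT
    have hs' : Summable fun i => |e (i + n + 1) 0| := (summable_nat_add_iff n).2 hs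
    have l1 : Tendsto (fun m => ∑' i, |e (i + n + 1) 0| +
        κ * ((∫ t in (0 : ℝ)..T, |a n t|) + ∫ t in (0 : ℝ)..T, |e (n + m + 1) t|)) atTop
        (nhds (∑' i, |e (i + n + 1) 0| + κ * ((∫ t in (0 : ℝ)..T, |a n t|) + 0))) := by
      refine ((tendsto_const_nhds.add ?_).const_mul κ).const_add _
      have := (hlim T hT).comp (tendsto_add_atTop_nat (n + 1))
      refine this.congr fun m => ?_
      simp only [Function.comp]
      rw [show m + (n + 1) = n + m + 1 by ring]
    rw [add_zero] at l1
    refine ge_of_tendsto' l1 fun m => ?_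
    have h1 := tele T hT n m
    have h2 := hs'.sum_le_tsum (Finset.range m) (fun i _ => abs_nonneg _)
    have h3 : 0 ≤ ∫ t in (0 : ℝ)..T, |a (n + m) t| :=
      intervalIntegral.integral_nonneg hT fun t _ => abs_nonneg _
    have h4 := mul_nonneg hκ.le h3
    linarith
  have aE : ∀ n T, 0 ≤ T → (∫ t in (0 : ℝ)..T, |a n t|) ≤ M * ∫ t in (0 : ℝ)..T, |e n t| := by
    intro n T hT
    rw [← intervalIntegral.integral_const_mul]
    exact intervalIntegral.integral_mono_on hT ((caabs _).intervalIntegrable _ _)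
      ((continuous_const.mul (cabs _)).intervalIntegrable _ _) fun t _ => haM n t
  have EC : ∀ n, ∃ C, ∀ T, 0 ≤ T → (∫ t in (0 : ℝ)..T, |e n t|) ≤ C := by
    intro n
    induction n with
    | zero => exact ⟨0, fun T _ => by simp [e0]⟩
    | succ n ih =>
      obtain ⟨C, hC⟩ := ih
      refine ⟨(∑' i, |e (i + n + 1) 0|) / κ + M * C, fun T hT => ?_⟩
      have h1 := bnd n T hT
      have h2 := aE n T hT
      have h3 := mul_le_mul_of_nonneg_left (hC T hT) hM
      rw [← mul_le_mul_iff_right₀ hκ, mul_add, mul_div_cancel₀ _ hκ.ne']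
      have h4 := mul_le_mul_of_nonneg_left (h2.trans h3) hκ.le
      linarith
  have inte : ∀ n, MeasureTheory.IntegrableOn (e n) (Set.Ioi 0) := by
    intro n
    obtain ⟨C, hC⟩ := EC n
    refine MeasureTheory.integrableOn_Ioi_of_intervalIntegral_norm_bounded C 0
      (fun T : ℝ => (ce n).integrableOn_Ioc) tendsto_id ?_
    filter_upwards [eventually_ge_atTop 0] with T hT
    exact hC T hT
  have inta : ∀ n, MeasureTheory.IntegrableOn (a n) (Set.Ioi 0) := by
    intro n
    refine MeasureTheory.Integrable.mono' ((inte n).norm.const_mul M)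
      (ca n).aestronglyMeasurable (Filter.Eventually.of_forall fun t => ?_)
    exact haM n t
  cases j with
  | zero =>
    have : e 0 = fun _ => 0 := funext e0
    rw [this]; exact tendsto_const_nhds
  | succ j =>
    refine MeasureTheory.tendsto_zero_of_hasDerivAt_of_integrableOn_Ioi (a := 0)
      (fun t ht => hd j t ht) ?_ (inte _)
    exact ((((inta j).sub (inta (j + 1))).sub (inte (j + 1))).add (inte (j + 2))).const_mul κ

/-- Theorem 2.3 (ii): for `0 < λ < 1` and any `Ū`-valued solution `u` of the
mean-field ODE system with initial condition `g ∈ U`, `u_j(t) → ū_j` as `t → ∞` for every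
`j`; in particular `ū` is the unique fixed point of the mean-field ODE system in `U`. -/
theorem mfSol_stable_fixed_point (L k : ℕ) (hk : 1 ≤ k) (hkL : k ≤ L)
    (lam : ℝ) (hlam0 : 0 < lam) (hlam1 : lam < 1)
    (ubar : ℕ → ℝ) (h0 : ubar 0 = 1)
    (hrec : ∀ m : ℕ, ubar (m + 1) = lam / k * fLk L k (ubar m))
    (g : ℕ → ℝ) (hg : InUbar g) (hgU : Summable (fun i : ℕ => g (i + 1)))
    (u : ℝ → ℕ → ℝ) (hu : IsMFSol L k lam g u) :
    (∀ j : ℕ, Tendsto (fun t : ℝ => u t j - ubar j) atTop (nhds 0)) ∧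
    (∀ w : ℕ → ℝ, InUbar w → Summable (fun i : ℕ => w (i + 1)) →
      (∀ j, 1 ≤ j → lam * (fLk L k (w (j - 1)) - fLk L k (w j)) = k * (w j - w (j + 1))) →
      w = ubar) := by
  obtain ⟨K, hK, cf, f0, fm, fk, fK⟩ := fLk_props L k hk hkL
  set f := fLk L k with hf
  have hkpos : (0 : ℝ) < k := by exact_mod_cast hk
  have hc : 0 < lam / k := by positivity
  have f_nn : ∀ x ∈ Set.Icc (0 : ℝ) 1, 0 ≤ f x := fun x hx => by
    rw [← f0]; exact fm (by simp) hx hx.1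
  have memI : ∀ w : ℕ → ℝ, InUbar w → ∀ j, w j ∈ Set.Icc (0 : ℝ) 1 := by
    intro w hw j
    refine ⟨hw.2.2 j, ?_⟩
    rw [← hw.1]
    exact antitone_nat_of_succ_le hw.2.1 (Nat.zero_le j)
  have ub : ∀ m, ubar m ∈ Set.Icc (0 : ℝ) 1 ∧ ubar m ≤ lam ^ m := by
    intro m
    induction m with
    | zero => simp [h0]
    | succ m ih =>
      have h1 : ubar (m + 1) ≤ lam * ubar m := by
        rw [hrec]
        calc lam / k * f (ubar m) ≤ lam / k * (k * ubar m) :=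
              mul_le_mul_of_nonneg_left (fk _ ih.1) hc.le
          _ = _ := by field_simp
      have h2 : 0 ≤ ubar (m + 1) := by
        rw [hrec]; exact mul_nonneg hc.le (f_nn _ ih.1)
      have h3 : lam * ubar m ≤ lam * lam ^ m := mul_le_mul_of_nonneg_left ih.2 hlam0.le
      have h4 : lam ^ (m + 1) ≤ 1 := pow_le_one₀ hlam0.le hlam1.le
      have h5 : lam ^ (m + 1) = lam * lam ^ m := by ring
      exact ⟨⟨h2, by linarith⟩, by linarith⟩
  have sub : Summable ubar :=
    Summable.of_nonneg_of_le (fun m => (ub m).1.1) (fun m => (ub m).2)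
      (summable_geometric_of_lt_one hlam0.le hlam1)
  refine ⟨?_, ?_⟩
  · obtain ⟨hu0, huI, hud⟩ := hu
    set v : ℕ → ℝ → ℝ := fun j t => u (max t 0) j with hv
    have vI : ∀ t, InUbar (fun j => v j t) := fun t => huI _ (le_max_right t 0)
    have vmem : ∀ j t, v j t ∈ Set.Icc (0 : ℝ) 1 := fun j t => memI _ (vI t) j
    have cv : ∀ j, Continuous (v j) := by
      intro j
      have h : ContinuousOn (fun τ => u τ j) (Set.Ici 0) := by
        rcases Nat.eq_zero_or_pos j with rfl | hj
        · exact (continuousOn_const (c := (1 : ℝ))).congr fun t ht => (huI t ht).1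
        · exact fun t ht => (hud j hj t ht).continuousWithinAt
      exact h.comp_continuous (continuous_id.max continuous_const) fun t => le_max_right t 0
    have dv : ∀ j t, 0 < t → HasDerivAt (v (j + 1))
        (lam * (f (v j t) - f (v (j + 1) t)) - k * (v (j + 1) t - v (j + 2) t)) t := by
      intro j t ht
      have h := (hud (j + 1) (by omega) t ht.le).hasDerivAt (Ici_mem_nhds ht)
      have hm : max t 0 = t := max_eq_left ht.le
      simp only [hv, hm]
      refine h.congr_of_eventuallyEq ?_
      filter_upwards [Ioi_mem_nhds ht] with s hs
      rw [max_eq_left (le_of_lt hs)]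
    have v0 : ∀ j, v j 0 = g j := fun j => by simp [hv, hu0]
    have gl : Tendsto (fun j => g (j + 1)) atTop (nhds 0) := hgU.tendsto_atTop_zero
    have cfv : ∀ j, Continuous fun t => f (v j t) := fun j => cf.comp (cv j)
    have vlim : ∀ T, 0 ≤ T → Tendsto (fun j => v j T) atTop (nhds 0) := by
      intro T hT
      have hl : ∀ t, ∃ l, Tendsto (fun j => v j t) atTop (nhds l) := fun t =>
        ⟨_, tendsto_atTop_ciInf (antitone_nat_of_succ_le (vI t).2.1)
          ⟨0, by rintro _ ⟨j, rfl⟩; exact (vI t).2.2 j⟩⟩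
      have cD : ∀ j, Continuous fun t =>
          lam * (f (v j t) - f (v (j + 1) t)) - k * (v (j + 1) t - v (j + 2) t) := fun j =>
        (continuous_const.mul ((cfv _).sub (cfv _))).sub
          (continuous_const.mul ((cv _).sub (cv _)))
      have ftc : ∀ j, ∫ t in (0 : ℝ)..T,
          (lam * (f (v j t) - f (v (j + 1) t)) - k * (v (j + 1) t - v (j + 2) t)) =
          v (j + 1) T - g (j + 1) := by
        intro j
        rw [← v0]
        exact intervalIntegral.integral_eq_sub_of_hasDerivAt_of_le hT (cv _).continuousOn
          (fun t ht => dv j t ht.1) ((cD j).intervalIntegrable _ _)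
      have dist1 : ∀ i j t, |v i t - v j t| ≤ 1 := by
        intro i j t
        have h1 := vmem i t
        have h2 := vmem j t
        rw [abs_le]; constructor <;> linarith [h1.1, h1.2, h2.1, h2.2]
      have dct : Tendsto (fun j => ∫ t in (0 : ℝ)..T,
          (lam * (f (v j t) - f (v (j + 1) t)) - k * (v (j + 1) t - v (j + 2) t))) atTop
          (nhds (∫ t in (0 : ℝ)..T, (0 : ℝ))) := by
        refine intervalIntegral.tendsto_integral_filter_of_dominated_convergence
          (fun _ => lam * K + k) (Eventually.of_forall fun j => (cD j).aestronglyMeasurable)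
          (Eventually.of_forall fun j => Eventually.of_forall fun t _ => ?_)
          (intervalIntegrable_const) (Eventually.of_forall fun t _ => ?_)
        · have h1 : |lam * (f (v j t) - f (v (j + 1) t))| ≤ lam * K := by
            rw [abs_mul, abs_of_pos hlam0]
            refine mul_le_mul_of_nonneg_left ?_ hlam0.le
            refine (fK _ (vmem j t) _ (vmem (j + 1) t)).trans ?_
            exact mul_le_of_le_one_right hK (dist1 _ _ _)
          have h2 : |(k : ℝ) * (v (j + 1) t - v (j + 2) t)| ≤ k := by
            rw [abs_mul, abs_of_pos hkpos]
            exact mul_le_of_le_one_right hkpos.le (dist1 _ _ _)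
          rw [Real.norm_eq_abs]
          exact (abs_sub _ _).trans (add_le_add h1 h2)
        · obtain ⟨l, hl⟩ := hl t
          have l1 := hl.comp (tendsto_add_atTop_nat 1)
          have l2 := hl.comp (tendsto_add_atTop_nat 2)
          have fl := (cf.tendsto l).comp hl
          have fl1 := (cf.tendsto l).comp l1
          have := ((fl.sub fl1).const_mul lam).sub ((l1.sub l2).const_mul (k : ℝ))
          simpa [Function.comp_def] using this
      rw [intervalIntegral.integral_zero] at dct
      have h := (dct.congr ftc).add gl
      simp only [sub_add_cancel, add_zero] at h
      exact (tendsto_add_atTop_iff_nat 1).1 h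
    have main := abstract_conv (fun j t => v j t - ubar j)
      (fun j t => lam / k * (f (v j t) - f (ubar j)))
      (fun j => (cv j).sub continuous_const)
      (fun j => continuous_const.mul ((cfv j).sub continuous_const)) k (lam / k * K) hkpos
      (by positivity)
      (fun j t ht => by
        have h := (dv j t ht).sub_const (ubar (j + 1))
        refine h.congr_deriv ?_
        have r1 := hrec j
        have r2 := hrec (j + 1)
        have r1k : (k : ℝ) * ubar (j + 1) = lam * f (ubar j) := by rw [r1]; field_simp
        have r2k : (k : ℝ) * ubar (j + 2) = lam * f (ubar (j + 1)) := by rw [r2]; field_simp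
        have e : ∀ y, (k : ℝ) * (lam / k * y) = lam * y := fun y => by field_simp
        linear_combination e (f (v (j + 1) t) - f (ubar (j + 1))) - e (f (v j t) - f (ubar j))
          - r1k + r2k)
      (fun t => by
        have : v 0 t = 1 := (vI t).1
        rw [this, h0, sub_self])
      (fun j t => by
        rcases le_total (v j t) (ubar j) with h | h
        · have := fm (vmem j t) (ub j).1 h
          refine mul_nonneg_of_nonpos_of_nonpos (by linarith) ?_
          exact mul_nonpos_of_nonneg_of_nonpos hc.le (by linarith)
        · have := fm (ub j).1 (vmem j t) h
          exact mul_nonneg (by linarith) (mul_nonneg hc.le (by linarith)))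
      (fun j t => by
        rw [abs_mul, abs_of_pos hc, mul_assoc]
        exact mul_le_mul_of_nonneg_left (fK _ (vmem j t) _ (ub j).1) hc.le)
      (by
        refine Summable.of_nonneg_of_le (fun j => abs_nonneg _) (fun j => ?_)
          (hgU.add ((summable_nat_add_iff 1).2 sub))
        rw [v0]
        have h1 := hg.2.2 (j + 1)
        have h2 := (ub (j + 1)).1.1
        rw [abs_le]; constructor <;> linarith)
      (by
        intro T hT
        have ul : Tendsto ubar atTop (nhds 0) := sub.tendsto_atTop_zero
        have : Tendsto (fun j => ∫ t in (0 : ℝ)..T, |v j t - ubar j|) atTop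
            (nhds (∫ t in (0 : ℝ)..T, (0 : ℝ))) := by
          refine intervalIntegral.tendsto_integral_filter_of_dominated_convergence
            (fun _ => 1)
            (Eventually.of_forall fun j => ((cv j).sub continuous_const).abs.aestronglyMeasurable)
            (Eventually.of_forall fun j => Eventually.of_forall fun t _ => ?_)
            (intervalIntegrable_const) (Eventually.of_forall fun t ht => ?_)
          · have h1 := vmem j t
            have h2 := (ub j).1
            rw [Real.norm_eq_abs, abs_abs, abs_le]
            constructor <;> linarith [h1.1, h1.2, h2.1, h2.2]
          · rw [Set.uIoc_of_le hT] at ht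
            have := ((vlim t ht.1.le).sub ul).abs
            simpa using this
        simpa using this)
    intro j
    refine (main j).congr' ?_
    filter_upwards [eventually_ge_atTop 0] with t ht
    simp only [hv, max_eq_left ht]
  · intro w hw hws hwe
    have wl1 : Tendsto (fun j => w (j + 1)) atTop (nhds 0) := hws.tendsto_atTop_zero
    have wl : Tendsto w atTop (nhds 0) := (tendsto_add_atTop_iff_nat 1).1 wl1
    have hcst : ∀ j, k * w (j + 1) - lam * f (w j) = k * w 1 - lam * f (w 0) := by
      intro j
      induction j with
      | zero => rfl
      | succ j ih =>
        have := hwe (j + 1) (by omega)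
        rw [Nat.add_sub_cancel] at this
        linarith
    have hl : Tendsto (fun j => k * w (j + 1) - lam * f (w j)) atTop (nhds 0) := by
      have := (wl1.const_mul (k : ℝ)).sub (((cf.tendsto 0).comp wl).const_mul lam)
      simpa [f0, Function.comp_def] using this
    have hz : k * w 1 - lam * f (w 0) = 0 :=
      tendsto_nhds_unique (tendsto_const_nhds.congr fun j => (hcst j).symm) hl
    funext j
    induction j with
    | zero => rw [h0, hw.1]
    | succ j ih =>
      rw [hrec, ← ih]
      have := hcst j
      rw [hz] at this
      field_simp
      linarith
end

section
/- Let 1 ≤ k ≤ L be integers, 0 < λ < 1, and let u be a solution of the mean-field ODE system taking values in Ū with initial condition g ∈ U satisfying g_j ≥ ū_j for all j ≥ 0. Then u_1(t) ≥ λ for all t ≥ 0, and the function t ↦ v_1(u(t)) is nonincreasing on [0,∞); in particular v_1(u(t)) ≤ v_1(g) for all t ≥ 0. -/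
open Finset Set

namespace MF

lemma choose_id (p q i : ℕ) (hi : i ≤ q) :
    (p + q).choose (p + i) * (p + i).choose i = (p + q).choose p * q.choose i := by
  have h := Nat.choose_mul (n := p + q) (k := p + i) (s := p) (by omega)
  have h2 : (p + i).choose i = (p + i).choose p := by
    rw [Nat.add_comm p i]; exact (Nat.choose_symm_add).symm ▸ rfl
  rw [h2, h]; congr 2 <;> omega

lemma S_eq (p k : ℕ) : ∑ i ∈ Finset.range (k + 1),
    ((p + 1 + k).choose (p + 1 + i) : ℝ) * ((p + i).choose i : ℝ) * (-1) ^ i = 1 := by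
  induction k with
  | zero => simp
  | succ k ih =>
    have h1 : ∀ i, ((p + 1 + (k + 1)).choose (p + 1 + i) : ℝ)
        = ((p + (k + 1)).choose (p + i) : ℝ) + ((p + 1 + k).choose (p + 1 + i) : ℝ) := by
      intro i
      have := Nat.choose_succ_succ (p + (k + 1)) (p + i)
      rw [show p + 1 + (k + 1) = (p + (k + 1)).succ by omega,
        show p + 1 + i = (p + i).succ by omega, this,
        show p + (k + 1) = p + 1 + k by omega]
      push_cast; rfl
    simp_rw [h1, add_mul, Finset.sum_add_distrib]
    rw [Finset.sum_range_succ (fun i => ((p + 1 + k).choose (p + 1 + i) : ℝ) * _ * _), ih]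
    have h2 : ∑ i ∈ Finset.range (k + 1 + 1),
        ((p + (k + 1)).choose (p + i) : ℝ) * ((p + i).choose i : ℝ) * (-1) ^ i
        = ((p + (k + 1)).choose p : ℝ) * ((-1 : ℝ) + 1) ^ (k + 1) := by
      rw [add_pow, Finset.mul_sum]
      apply Finset.sum_congr rfl
      intro i hi
      have := choose_id p (k + 1) i (by simp at hi; omega)
      have h3 : ((p + (k + 1)).choose (p + i) : ℝ) * ((p + i).choose i : ℝ)
        = ((p + (k + 1)).choose p : ℝ) * ((k + 1).choose i : ℝ) := by exact_mod_cast this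
      rw [h3]; simp; ring
    rw [h2, Nat.choose_eq_zero_of_lt (show p + 1 + k < p + 1 + (k + 1) by omega)]
    simp

lemma A_eq (p k : ℕ) : ∑ i ∈ Finset.range k,
    ((p + 1 + k).choose (p + 2 + i) : ℝ) * ((p + i).choose i : ℝ) * (-1) ^ i = k := by
  induction k with
  | zero => simp
  | succ k ih =>
    have h1 : ∀ i, ((p + 1 + (k + 1)).choose (p + 2 + i) : ℝ)
        = ((p + 1 + k).choose (p + 1 + i) : ℝ) + ((p + 1 + k).choose (p + 2 + i) : ℝ) := by
      intro i
      have := Nat.choose_succ_succ (p + 1 + k) (p + 1 + i)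
      rw [show p + 1 + (k + 1) = (p + 1 + k).succ by omega,
        show p + 2 + i = (p + 1 + i).succ by omega, this]
      push_cast; rfl
    simp_rw [h1, add_mul, Finset.sum_add_distrib]
    rw [S_eq, Finset.sum_range_succ, ih,
      Nat.choose_eq_zero_of_lt (show p + 1 + k < p + 2 + k by omega)]
    push_cast; ring

lemma fLk_eq (p k : ℕ) (x : ℝ) : fLk (p + 1 + k) k x = ∑ i ∈ Finset.range k,
    ((p + 1 + k).choose (p + 2 + i) : ℝ) * ((p + i).choose i : ℝ) * (-1) ^ i
      * x ^ (p + 2 + i) := by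
  unfold fLk
  have : Finset.Icc 1 k = Finset.Ico (0 + 1) (k + 1) := by ext; simp
  rw [this, ← Finset.sum_Ico_add', Finset.range_eq_Ico]
  apply Finset.sum_congr rfl
  intro i _
  rw [show p + 1 + k - k + (i + 1) = p + 2 + i by omega, show p + 2 + i - 2 = p + i by omega,
    Nat.add_sub_cancel]

lemma fLk_diag (k : ℕ) (hk : 1 ≤ k) (x : ℝ) : fLk k k x = k * x := by
  unfold fLk
  rw [Finset.sum_eq_single_of_mem 1 (by simp [hk])]
  · simp
  · intro i hi h
    simp at hi
    rw [Nat.choose_eq_zero_of_lt (show k - k + i - 2 < i - 1 by omega)]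
    simp

lemma fLk_zero (L k : ℕ) : fLk L k 0 = 0 := by
  unfold fLk
  apply Finset.sum_eq_zero
  intro i hi
  simp at hi
  rw [zero_pow (by omega)]; simp

lemma fLk_one (L k : ℕ) (hk : 1 ≤ k) (hkL : k ≤ L) : fLk L k 1 = k := by
  rcases hkL.eq_or_lt with rfl | h
  · rw [fLk_diag _ hk]; simp
  · obtain ⟨p, rfl⟩ : ∃ p, L = p + 1 + k := ⟨L - k - 1, by omega⟩
    rw [fLk_eq, ← A_eq p k]
    simp

lemma fLk_mono (L k : ℕ) (hk : 1 ≤ k) (hkL : k ≤ L) :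
    MonotoneOn (fLk L k) (Set.Icc 0 1) := by
  rcases hkL.eq_or_lt with rfl | h
  · intro x _ y _ hxy
    rw [fLk_diag _ hk, fLk_diag _ hk]; gcongr
  · obtain ⟨p, rfl⟩ : ∃ p, L = p + 1 + k := ⟨L - k - 1, by omega⟩
    obtain ⟨q, rfl⟩ : ∃ q, k = q + 1 := ⟨k - 1, by omega⟩
    set c : ℕ → ℝ := fun i => ((p + 1 + (q + 1)).choose (p + 2 + i) : ℝ) *
      ((p + i).choose i : ℝ) * (-1) ^ i with hc
    set F1 : ℝ → ℝ := fun x => ∑ i ∈ Finset.range (q + 1),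
      c i * ((p + 2 + i : ℕ) * x ^ (p + 1 + i)) with hF1
    set F2 : ℝ → ℝ := fun x => ∑ i ∈ Finset.range (q + 1),
      c i * ((p + 2 + i : ℕ) * ((p + 1 + i : ℕ) * x ^ (p + i))) with hF2
    have d1 : ∀ x, HasDerivAt (fLk (p + 1 + (q + 1)) (q + 1)) (F1 x) x := by
      intro x
      rw [funext (fLk_eq p (q + 1))]
      apply HasDerivAt.fun_sum
      intro i _
      exact (hasDerivAt_pow (p + 2 + i) x).const_mul (c i) |>.congr_deriv (by
        rw [show p + 2 + i - 1 = p + 1 + i by omega])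
    have d2 : ∀ x, HasDerivAt F1 (F2 x) x := by
      intro x
      apply HasDerivAt.fun_sum
      intro i _
      exact ((hasDerivAt_pow (p + 1 + i) x).const_mul _).const_mul (c i) |>.congr_deriv (by
        rw [show p + 1 + i - 1 = p + i by omega])
    have e2 : ∀ x, F2 x = ((p + q + 2 : ℕ) * (p + q + 1 : ℕ) * (p + q).choose p : ℝ) *
        (x ^ p * (-x + 1) ^ q) := by
      intro x
      rw [add_pow, Finset.mul_sum, Finset.mul_sum]
      apply Finset.sum_congr rfl
      intro i hi
      have h1 := choose_id p q i (by simp at hi; omega)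
      have h2 := Nat.add_one_mul_choose_eq (p + q + 1) (p + i + 1)
      have h3 := Nat.add_one_mul_choose_eq (p + q) (p + i)
      have h4 : (((p + 1 + (q + 1)).choose (p + 2 + i) : ℕ) : ℝ) * (p + 2 + i : ℕ) =
          (p + q + 2 : ℕ) * ((p + q + 1).choose (p + i + 1) : ℕ) := by
        rw [show p + 1 + (q + 1) = p + q + 2 by omega, show p + 2 + i = p + i + 2 by omega]
        exact_mod_cast h2.symm
      have h5 : (((p + q + 1).choose (p + i + 1) : ℕ) : ℝ) * (p + 1 + i : ℕ) =
          (p + q + 1 : ℕ) * ((p + q).choose (p + i) : ℕ) := by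
        rw [show p + 1 + i = p + i + 1 by omega]
        exact_mod_cast h3.symm
      have h6 : ((p + q).choose (p + i) : ℝ) * ((p + i).choose i : ℝ)
        = ((p + q).choose p : ℝ) * (q.choose i : ℝ) := by exact_mod_cast h1
      rw [hc, neg_pow x i, pow_add]
      linear_combination (((p + i).choose i : ℝ) * (-1) ^ i * (p + 1 + i : ℕ) * x ^ p * x ^ i) * h4
        + ((p + q + 2 : ℕ) * ((p + i).choose i : ℝ) * (-1) ^ i * x ^ p * x ^ i) * h5
        + ((p + q + 2 : ℕ) * (p + q + 1 : ℕ) * (-1) ^ i * x ^ p * x ^ i : ℝ) * h6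
    have m1 : MonotoneOn F1 (Set.Icc 0 1) := by
      apply monotoneOn_of_deriv_nonneg (convex_Icc 0 1)
      · exact fun x _ => (d2 x).continuousAt.continuousWithinAt
      · exact fun x _ => (d2 x).differentiableAt.differentiableWithinAt
      · intro x hx
        rw [interior_Icc] at hx
        rw [(d2 x).deriv, e2]
        have := hx.1.le
        have : 0 ≤ -x + 1 := by linarith [hx.2]
        positivity
    apply monotoneOn_of_deriv_nonneg (convex_Icc 0 1)
    · exact fun x _ => (d1 x).continuousAt.continuousWithinAt
    · exact fun x _ => (d1 x).differentiableAt.differentiableWithinAt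
    · intro x hx
      rw [interior_Icc] at hx
      rw [(d1 x).deriv]
      have h0 : F1 0 = 0 := by
        apply Finset.sum_eq_zero
        intro i _
        rw [zero_pow (by omega)]; simp
      rw [← h0]
      exact m1 ⟨le_rfl, zero_le_one⟩ ⟨hx.1.le, hx.2.le⟩ hx.1.le

lemma fLk_lip (L k : ℕ) : ∃ K : ℝ, 0 ≤ K ∧ ∀ x ∈ Set.Icc (0 : ℝ) 1, ∀ y ∈ Set.Icc (0 : ℝ) 1,
    |fLk L k x - fLk L k y| ≤ K * |x - y| := by
  have hc : ContDiff ℝ 1 (fLk L k) := by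
    unfold fLk; fun_prop
  obtain ⟨K, hK⟩ := hc.contDiffOn.exists_lipschitzOnWith one_ne_zero (convex_Icc 0 1) isCompact_Icc
  exact ⟨K, K.2, fun x hx y hy => by
    simpa [Real.dist_eq] using hK.dist_le_mul x hx y hy⟩

lemma fLk_mem (L k : ℕ) (hk : 1 ≤ k) (hkL : k ≤ L) (x : ℝ) (hx : x ∈ Set.Icc (0 : ℝ) 1) :
    fLk L k x ∈ Set.Icc (0 : ℝ) k := by
  have m := fLk_mono L k hk hkL
  constructor
  · rw [← fLk_zero L k]; exact m (by simp) hx hx.1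
  · rw [← fLk_one L k hk hkL]; exact m hx (by simp) hx.2

lemma _root_.InUbar.mem {v : ℕ → ℝ} (h : InUbar v) (j : ℕ) : v j ∈ Set.Icc (0 : ℝ) 1 := by
  refine ⟨h.2.2 j, ?_⟩
  rw [← h.1]
  exact antitone_nat_of_succ_le h.2.1 (Nat.zero_le j)

lemma ubar_mem (L k : ℕ) (hk : 1 ≤ k) (hkL : k ≤ L)
    (lam : ℝ) (hlam0 : 0 < lam) (hlam1 : lam < 1)
    (ubar : ℕ → ℝ) (h0 : ubar 0 = 1)
    (hrec : ∀ m : ℕ, ubar (m + 1) = lam / k * fLk L k (ubar m)) (j : ℕ) :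
    ubar j ∈ Set.Icc (0 : ℝ) 1 := by
  have hk0 : (0 : ℝ) < k := by exact_mod_cast hk
  induction j with
  | zero => simp [h0]
  | succ j ih =>
    obtain ⟨h1, h2⟩ := fLk_mem L k hk hkL _ ih
    rw [hrec]
    refine ⟨by positivity, ?_⟩
    calc lam / k * fLk L k (ubar j) ≤ lam / k * k := by gcongr
      _ = lam := by field_simp
      _ ≤ 1 := hlam1.le

lemma compare (L k : ℕ) (hk : 1 ≤ k) (hkL : k ≤ L)
    (lam : ℝ) (hlam0 : 0 < lam) (hlam1 : lam < 1)
    (ubar : ℕ → ℝ) (h0 : ubar 0 = 1)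
    (hrec : ∀ m : ℕ, ubar (m + 1) = lam / k * fLk L k (ubar m))
    (g : ℕ → ℝ) (hdom : ∀ j, ubar j ≤ g j)
    (u : ℝ → ℕ → ℝ) (hu : IsMFSol L k lam g u) (j : ℕ) (t : ℝ) (ht : 0 ≤ t) :
    ubar j ≤ u t j := by
  have hk0 : (0 : ℝ) < k := by exact_mod_cast hk
  obtain ⟨hu0, hub, hud⟩ := hu
  have hbm := ubar_mem L k hk hkL lam hlam0 hlam1 ubar h0 hrec
  have hmono := fLk_mono L k hk hkL
  obtain ⟨K, hK0, hK⟩ := fLk_lip L k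
  have one : ∀ x ∈ Set.Icc (0 : ℝ) 1, ∀ y ∈ Set.Icc (0 : ℝ) 1, ∀ h : ℝ, 0 ≤ h → x - y ≤ h →
      fLk L k x - fLk L k y ≤ K * h := by
    intro x hx y hy h hh hxy
    rcases le_total x y with h1 | h1
    · have := hmono hx hy h1
      have : 0 ≤ K * h := by positivity
      linarith
    · have h2 := (abs_le.1 (hK x hx y hy)).2
      rw [abs_of_nonneg (by linarith)] at h2
      exact h2.trans (by gcongr)
  have hrec' : ∀ m, k * ubar (m + 1) = lam * fLk L k (ubar m) := by
    intro m; rw [hrec]; field_simp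
  set C : ℝ := lam * K + k with hC
  have hC0 : 0 ≤ C := by positivity
  have key : ∀ n : ℕ, ∀ j, ∀ t, 0 ≤ t → ubar j - u t j ≤ (C * t) ^ n / (n.factorial : ℝ) := by
    intro n
    induction n with
    | zero =>
      intro j t ht
      have := (hbm j).2
      have := (hub t ht).2.2 j
      simp; linarith
    | succ n ih =>
      intro j t ht
      rcases j with _ | j
      · rw [h0, (hub t ht).1, sub_self]; positivity
      apply le_of_forall_pos_le_add
      intro δ hδ
      set ε := δ / (1 + t) with hε
      have hε0 : 0 < ε := by positivity
      have hδε : δ = ε * (1 + t) := by rw [hε]; field_simp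
      rw [hδε]
      have hd := hud (j + 1) (by omega)
      simp only [Nat.add_sub_cancel] at hd
      refine image_le_of_deriv_right_lt_deriv_boundary (a := 0) (b := t)
        (f := fun τ => ubar (j + 1) - u τ (j + 1))
        (f' := fun τ => - (lam * (fLk L k (u τ j) - fLk L k (u τ (j + 1)))
          - k * (u τ (j + 1) - u τ (j + 1 + 1))))
        (B := fun τ => (C * τ) ^ (n + 1) / ((n + 1).factorial : ℝ) + ε * (1 + τ))
        (B' := fun τ => C * ((C * τ) ^ n / (n.factorial : ℝ)) + ε)
        ?_ ?_ ?_ ?_ ?_ ⟨ht, le_rfl⟩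
      · intro x hx
        exact ((hd x hx.1).continuousWithinAt.mono Set.Icc_subset_Ici_self).const_sub _
      · intro x hx
        exact ((hd x hx.1).mono (Set.Ici_subset_Ici.2 hx.1)).const_sub _
      · have := hdom (j + 1)
        simp [hu0]; linarith
      · intro x
        have e1 : HasDerivAt (fun τ : ℝ => C * τ) C x := by
          simpa using (hasDerivAt_id x).const_mul C
        have e2 := (e1.pow (n + 1)).div_const ((n + 1).factorial : ℝ)
        have e3 : HasDerivAt (fun τ : ℝ => ε * (1 + τ)) ε x := by
          simpa using ((hasDerivAt_id x).const_add 1).const_mul ε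
        refine (e2.add e3).congr_deriv ?_
        rw [Nat.factorial_succ]
        have : (n.factorial : ℝ) ≠ 0 := by positivity
        push_cast
        field_simp
      · intro x hx heq
        have hx0 := hx.1
        have hh : 0 ≤ (C * x) ^ n / (n.factorial : ℝ) := by positivity
        have hB : 0 < (C * x) ^ (n + 1) / ((n + 1).factorial : ℝ) + ε * (1 + x) := by positivity
        rw [← heq] at hB
        have um := fun j => (hub x hx0).mem j
        have a1 := one _ (hbm j) _ (um j) _ hh (ih j x hx0)
        have a2 := hmono (um (j + 1)) (hbm (j + 1)) (by linarith)
        have a3 := ih (j + 1 + 1) x hx0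
        have r1 := hrec' j
        have r2 := hrec' (j + 1)
        have b1 := mul_le_mul_of_nonneg_left a1 hlam0.le
        have b2 := mul_le_mul_of_nonneg_left a2 hlam0.le
        have b3 := mul_le_mul_of_nonneg_left a3 hk0.le
        have b4 := mul_pos hk0 hB
        simp only [hC]
        nlinarith
  have hl := FloorSemiring.tendsto_pow_div_factorial_atTop (C * t)
  have := ge_of_tendsto' hl (fun n => key n j t ht)
  linarith

end MF

/-- for `0 < λ < 1` and a `Ū`-valued solution `u` with initial condition
`g ∈ U` dominating the fixed point `ū` coordinatewise, one has `u_1(t) ≥ λ` for all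
`t ≥ 0` and `t ↦ v_1(u(t))` is nonincreasing on `[0,∞)`; in particular
`v_1(u(t)) ≤ v_1(g)` for all `t ≥ 0`. -/
theorem mfSol_v1_nonincreasing (L k : ℕ) (hk : 1 ≤ k) (hkL : k ≤ L)
    (lam : ℝ) (hlam0 : 0 < lam) (hlam1 : lam < 1)
    (ubar : ℕ → ℝ) (h0 : ubar 0 = 1)
    (hrec : ∀ m : ℕ, ubar (m + 1) = lam / k * fLk L k (ubar m))
    (g : ℕ → ℝ) (hg : InUbar g) (hgU : Summable (fun i : ℕ => g (i + 1)))
    (hdom : ∀ j, ubar j ≤ g j)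
    (u : ℝ → ℕ → ℝ) (hu : IsMFSol L k lam g u) :
    (∀ t ∈ Set.Ici (0 : ℝ), lam ≤ u t 1) ∧
    (∀ t ∈ Set.Ici (0 : ℝ), Summable (fun i : ℕ => u t (i + 1))) ∧
    AntitoneOn (fun t : ℝ => ∑' i : ℕ, u t (i + 1)) (Set.Ici (0 : ℝ)) ∧
    (∀ t ∈ Set.Ici (0 : ℝ), (∑' i : ℕ, u t (i + 1)) ≤ ∑' i : ℕ, g (i + 1)) := by
  have hk0 : (0 : ℝ) < k := by exact_mod_cast hk
  have hlow : ∀ t ∈ Set.Ici (0 : ℝ), lam ≤ u t 1 := by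
    intro t ht
    have h := MF.compare L k hk hkL lam hlam0 hlam1 ubar h0 hrec g hdom u hu 1 t ht
    rw [hrec 0, h0, MF.fLk_one L k hk hkL] at h
    have e : lam / k * (k : ℝ) = lam := by field_simp
    rwa [e] at h
  obtain ⟨hu0, hub, hud⟩ := hu
  set V : ℕ → ℝ → ℝ := fun N t => ∑ i ∈ Finset.range N, u t (i + 1) with hV
  have hVd : ∀ N, ∀ t, 0 ≤ t → HasDerivWithinAt (V N)
      (lam * (k - fLk L k (u t N)) - k * (u t 1 - u t (N + 1))) (Set.Ici 0) t := by
    intro N t ht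
    have h1 := HasDerivWithinAt.fun_sum (u := Finset.range N) (fun i _ => hud (i + 1) (by omega) t ht)
    refine h1.congr_deriv ?_
    simp only [Nat.add_sub_cancel]
    rw [Finset.sum_sub_distrib, ← Finset.mul_sum, ← Finset.mul_sum,
      Finset.sum_range_sub' (fun i => fLk L k (u t i)),
      Finset.sum_range_sub' (fun i => u t (i + 1)), (hub t ht).1, MF.fLk_one L k hk hkL]
  -- increments of the partial sums
  have hinc : ∀ N s t c, 0 ≤ s → s ≤ t → (∀ x ∈ Set.Icc s t, u x (N + 1) ≤ c) →
      V N t ≤ V N s + k * c * (t - s) := by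
    intro N s t c hs hst hc
    refine image_le_of_deriv_right_le_deriv_boundary (a := s) (b := t) (f := V N)
      (f' := fun t => (lam * (k - fLk L k (u t N)) - k * (u t 1 - u t (N + 1))))
      (B := fun x => V N s + k * c * (x - s)) (B' := fun _ => k * c) ?_ ?_ ?_ ?_ ?_ ?_ ⟨hst, le_rfl⟩
    · intro x hx
      exact (hVd N x (hs.trans hx.1)).continuousWithinAt.mono
        (fun y hy => hs.trans hy.1)
    · intro x hx
      exact (hVd N x (hs.trans hx.1)).mono (Set.Ici_subset_Ici.2 (hs.trans hx.1))
    · simp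
    · fun_prop
    · intro x _
      have e : HasDerivAt (fun x : ℝ => V N s + k * c * (x - s)) (k * c) x := by
        simpa using (((hasDerivAt_id x).sub_const s).const_mul (k * c)).const_add (V N s)
      exact e.hasDerivWithinAt
    · intro x hx
      have hx0 := hs.trans hx.1
      have a1 := (MF.fLk_mem L k hk hkL _ ((hub x hx0).mem N)).1
      have a2 := mul_le_mul_of_nonneg_left (hlow x hx0) hk0.le
      have a3 := mul_le_mul_of_nonneg_left (hc x ⟨hx.1, hx.2.le⟩) hk0.le
      have a4 := mul_nonneg hlam0.le a1
      nlinarith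
  set G : ℝ := ∑' i : ℕ, g (i + 1) with hG
  have hG0 : 0 ≤ G := tsum_nonneg (fun i => hg.2.2 _)
  have hbd : ∀ N t, 0 ≤ t → V N t ≤ G + k * t := by
    intro N t ht
    have h1 := hinc N 0 t 1 le_rfl ht (fun x hx => ((hub x hx.1).mem (N + 1)).2)
    have h2 : V N 0 ≤ G := by
      simp only [hV, hu0]
      exact hgU.sum_le_tsum _ (fun i _ => hg.2.2 _)
    linarith
  have hsum : ∀ t ∈ Set.Ici (0 : ℝ), Summable (fun i : ℕ => u t (i + 1)) := by
    intro t ht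
    exact summable_of_sum_range_le (fun i => (hub t ht).2.2 _) (fun N => hbd N t ht)
  have hdec : ∀ N t, 0 ≤ t → u t (N + 1) ≤ (G + k * t) / ((N : ℝ) + 1) := by
    intro N t ht
    rw [le_div_iff₀ (by positivity)]
    refine le_trans ?_ (hbd (N + 1) t ht)
    have ha : Antitone (u t) := antitone_nat_of_succ_le (hub t ht).2.1
    have := Finset.card_nsmul_le_sum (Finset.range (N + 1)) (fun i => u t (i + 1)) (u t (N + 1))
      (fun i hi => ha (by simp at hi; omega))
    simp only [Finset.card_range, nsmul_eq_mul] at this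
    push_cast at this
    linarith
  have hanti : AntitoneOn (fun t : ℝ => ∑' i : ℕ, u t (i + 1)) (Set.Ici (0 : ℝ)) := by
    intro s hs t ht hst
    have hs0 : 0 ≤ s := hs
    have ht0 : 0 ≤ t := ht
    have l1 := (hsum t ht).hasSum.tendsto_sum_nat
    have l2 := (hsum s hs).hasSum.tendsto_sum_nat
    have l3 : Filter.Tendsto (fun N : ℕ => k * (G + k * t) * (t - s) * (1 / ((N : ℝ) + 1)))
        Filter.atTop (nhds 0) := by
      simpa using (tendsto_one_div_add_atTop_nhds_zero_nat (𝕜 := ℝ)).const_mul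
        (k * (G + k * t) * (t - s))
    have l4 := l2.add l3
    rw [add_zero] at l4
    refine le_of_tendsto_of_tendsto' l1 l4 (fun N => ?_)
    have := hinc N s t ((G + k * t) / ((N : ℝ) + 1)) hs0 hst (fun x hx => by
      refine (hdec N x (hs0.trans hx.1)).trans ?_
      have := hx.2
      gcongr)
    refine this.trans (le_of_eq ?_)
    simp only [hV]
    ring
  refine ⟨hlow, hsum, hanti, fun t ht => ?_⟩
  have := hanti (show (0 : ℝ) ∈ Set.Ici 0 from Set.mem_Ici.2 le_rfl) ht ht
  simpa only [hu0] using this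
end
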